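/- arXiv:1711.04343 — 10 statements merged into one kernel-verified Lean document; each statement's English description precedes it below -/
import Mathlib

section
/- Let V ∈ ℝ^{N×N} be symmetric positive definite with positive definite square root V^{1/2}, let f : ℝ^N → ℝ be differentiable, let L ≥ 0, and set g := f ∘ (V^{1/2})⁻¹. Then the gradient of g is L-Lipschitz continuous with respect to the Euclidean norm if and only if ‖V⁻¹(∇f(x) − ∇f(x̄))‖_V ≤ L‖x − x̄‖_V holds for all x, x̄ ∈ ℝ^N. -/
open Matrix

/-!
The symmetric matrix `S` satisfies `S * S = V`, so `‖z‖_V = ‖S z‖`, and since `V⁻¹ = S⁻¹ S⁻¹`, also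
`‖V⁻¹ w‖_V = ‖S⁻¹ w‖`. The metric Lipschitz inequality at `(x, y)` is therefore
`‖S⁻¹ (∇f x - ∇f y)‖ ≤ L ‖S x - S y‖`, which is the Euclidean Lipschitz inequality for
`S⁻¹ ∘ ∇f ∘ S⁻¹` at `(S x, S y)`. As `S` is a bijection, the two families of inequalities coincide.
-/

theorem dotProduct_mulVec_self_of_symm {N : ℕ} (A : Matrix (Fin N) (Fin N) ℝ) (hA : Aᵀ = A)
    (z : Fin N → ℝ) : (A *ᵥ z) ⬝ᵥ (A *ᵥ z) = z ⬝ᵥ ((A * A) *ᵥ z) := by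
  rw [← Matrix.mulVec_mulVec, Matrix.dotProduct_mulVec z A, ← Matrix.mulVec_transpose, hA]

/-- Part of Lemma A.2: for `V` symmetric positive definite with positive definite square root
`S` (so `S * S = V`) and `f` differentiable with gradient `f'`, the gradient of
`g := f ∘ S⁻¹` (which is `x ↦ S⁻¹ ∇f (S⁻¹ x)` by the chain rule) is `L`-Lipschitz continuous
with respect to the Euclidean norm if and only if
`‖V⁻¹(∇f x − ∇f x̄)‖_V ≤ L ‖x − x̄‖_V` holds for all `x, x̄`. -/
theorem lipschitz_grad_metric_equiv {N : ℕ}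
    (V S : Matrix (Fin N) (Fin N) ℝ) (hV : V.PosDef) (hS : S.PosDef)
    (hSsq : S * S = V)
    (f : (Fin N → ℝ) → ℝ) (f' : (Fin N → ℝ) → (Fin N → ℝ))
    (hdiff : Differentiable ℝ f)
    (hgrad : ∀ x v, fderiv ℝ f x v = f' x ⬝ᵥ v)
    (L : ℝ) (hL : 0 ≤ L) :
    (∀ x y : Fin N → ℝ,
        Real.sqrt ((S⁻¹ *ᵥ f' (S⁻¹ *ᵥ x) - S⁻¹ *ᵥ f' (S⁻¹ *ᵥ y)) ⬝ᵥ
            (S⁻¹ *ᵥ f' (S⁻¹ *ᵥ x) - S⁻¹ *ᵥ f' (S⁻¹ *ᵥ y)))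
          ≤ L * Real.sqrt ((x - y) ⬝ᵥ (x - y)))
      ↔ (∀ x y : Fin N → ℝ,
        Real.sqrt ((V⁻¹ *ᵥ (f' x - f' y)) ⬝ᵥ (V *ᵥ (V⁻¹ *ᵥ (f' x - f' y))))
          ≤ L * Real.sqrt ((x - y) ⬝ᵥ (V *ᵥ (x - y)))) := by
  have hdet : IsUnit S.det := (Matrix.isUnit_iff_isUnit_det S).mp hS.isUnit
  have hdetV : IsUnit V.det := (Matrix.isUnit_iff_isUnit_det V).mp hV.isUnit
  have hST : Sᵀ = S := by
    have h := hS.isHermitian.eq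
    rwa [Matrix.conjTranspose_eq_transpose_of_trivial] at h
  have hSinvT : S⁻¹ᵀ = S⁻¹ := by rw [Matrix.transpose_nonsing_inv, hST]
  have hVinv : V⁻¹ = S⁻¹ * S⁻¹ := by rw [← hSsq, Matrix.mul_inv_rev]
  have hprimal : ∀ z : Fin N → ℝ, z ⬝ᵥ (V *ᵥ z) = (S *ᵥ z) ⬝ᵥ (S *ᵥ z) := fun z => by
    rw [← hSsq]
    exact (dotProduct_mulVec_self_of_symm S hST z).symm
  have hdual : ∀ w : Fin N → ℝ,
      (V⁻¹ *ᵥ w) ⬝ᵥ (V *ᵥ (V⁻¹ *ᵥ w)) = (S⁻¹ *ᵥ w) ⬝ᵥ (S⁻¹ *ᵥ w) := fun w => by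
    rw [Matrix.mulVec_mulVec w V, Matrix.mul_nonsing_inv V hdetV, Matrix.one_mulVec, hVinv,
      dotProduct_comm]
    exact (dotProduct_mulVec_self_of_symm S⁻¹ hSinvT w).symm
  have hcancel : ∀ z : Fin N → ℝ, S⁻¹ *ᵥ (S *ᵥ z) = z := fun z => by
    rw [Matrix.mulVec_mulVec, Matrix.nonsing_inv_mul S hdet, Matrix.one_mulVec]
  have hcancel' : ∀ z : Fin N → ℝ, S *ᵥ (S⁻¹ *ᵥ z) = z := fun z => by
    rw [Matrix.mulVec_mulVec, Matrix.mul_nonsing_inv S hdet, Matrix.one_mulVec]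
  -- The dual identity goes first: its left side is also an instance of `hprimal`.
  simp only [hdual]
  simp only [hprimal]
  simp only [Matrix.mulVec_sub]
  constructor
  · intro h x y
    simpa only [hcancel] using h (S *ᵥ x) (S *ᵥ y)
  · intro h x y
    simpa only [hcancel'] using h (S⁻¹ *ᵥ x) (S⁻¹ *ᵥ y)
end

section
/- Let f(x) = ½⟨x, H x⟩ + ⟨b, x⟩ + c be quadratic with H ∈ ℝ^{N×N} symmetric positive definite, b ∈ ℝ^N, c ∈ ℝ, so ∇f(x) = H x + b. Let T ∈ ℝ^{N×N} be symmetric and set M := T − H. Then for every x̄, x ∈ ℝ^N and β ∈ ℝ^R, with y_β := x̄ + D β for D ∈ ℝ^{N×R}, the identity f(y_β) + ⟨∇f(y_β), x − y_β⟩ + ½‖x − y_β‖_T² = f(x̄) + ⟨∇f(x̄), x − x̄⟩ + ½‖x − x̄‖_T² + ½⟨D β, M D β⟩ − ⟨x − x̄, M D β⟩ holds. -/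
open Matrix

/-! Both sides are `f x` plus a quadratic term in `M = T - H`. Since `f` is quadratic with symmetric
Hessian `H`, its linearization at any point `z` satisfies
`f z + ⟨∇f z, x - z⟩ = f x - ½‖x - z‖_H²` (`quadratic_linearization`), so adding `½‖x - z‖_T²` gives
`f x + ½‖x - z‖_M²`. Taking `z = x̄ + Dβ` and `z = x̄`, the identity becomes the expansion of
`½‖(x - x̄) - Dβ‖_M²` for the symmetric matrix `M` (`quadratic_form_sub`). -/

theorem dotProduct_mulVec_symm {N : ℕ} {A : Matrix (Fin N) (Fin N) ℝ} (hA : A.IsSymm)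
    (v w : Fin N → ℝ) : v ⬝ᵥ (A *ᵥ w) = w ⬝ᵥ (A *ᵥ v) := by
  rw [dotProduct_mulVec, ← mulVec_transpose, hA.eq, dotProduct_comm]

theorem quadratic_form_sub {N : ℕ} {A : Matrix (Fin N) (Fin N) ℝ} (hA : A.IsSymm)
    (u d : Fin N → ℝ) :
    (u - d) ⬝ᵥ (A *ᵥ (u - d)) = u ⬝ᵥ (A *ᵥ u) - 2 * (u ⬝ᵥ (A *ᵥ d)) + d ⬝ᵥ (A *ᵥ d) := by
  simp only [mulVec_sub, dotProduct_sub, sub_dotProduct]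
  rw [dotProduct_mulVec_symm hA d u]
  ring

/-- The second-order Taylor formula of a quadratic function is exact. -/
theorem quadratic_linearization {N : ℕ} {H : Matrix (Fin N) (Fin N) ℝ} (hH : H.IsSymm)
    (b z x : Fin N → ℝ) (c : ℝ) :
    1 / 2 * (z ⬝ᵥ (H *ᵥ z)) + b ⬝ᵥ z + c + (H *ᵥ z + b) ⬝ᵥ (x - z)
      = 1 / 2 * (x ⬝ᵥ (H *ᵥ x)) + b ⬝ᵥ x + c - 1 / 2 * ((x - z) ⬝ᵥ (H *ᵥ (x - z))) := by
  rw [quadratic_form_sub hH]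
  simp only [add_dotProduct, dotProduct_sub, dotProduct_comm (H *ᵥ z)]
  ring

/-- The key algebraic expansion in the proof of Theorem 4.3: for a quadratic
`f x = ½⟨x, H x⟩ + ⟨b, x⟩ + c` (so `∇f x = H x + b`), symmetric `T`, `M := T − H`, and
`y_β := x̄ + D β`, one has
`f(y_β) + ⟨∇f(y_β), x − y_β⟩ + ½‖x − y_β‖_T²
  = f(x̄) + ⟨∇f(x̄), x − x̄⟩ + ½‖x − x̄‖_T² + ½⟨Dβ, M Dβ⟩ − ⟨x − x̄, M Dβ⟩`. -/
theorem quadratic_extrapolation_identity {N R : ℕ}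
    (H T M : Matrix (Fin N) (Fin N) ℝ) (hH : H.PosDef) (hT : T.IsSymm)
    (hM : M = T - H)
    (b : Fin N → ℝ) (c : ℝ)
    (f : (Fin N → ℝ) → ℝ)
    (hf : ∀ z, f z = 1 / 2 * (z ⬝ᵥ (H *ᵥ z)) + b ⬝ᵥ z + c)
    (D : Matrix (Fin N) (Fin R) ℝ)
    (xb x : Fin N → ℝ) (β : Fin R → ℝ)
    (y : Fin N → ℝ) (hy : y = xb + D *ᵥ β) :
    f y + (H *ᵥ y + b) ⬝ᵥ (x - y) + 1 / 2 * ((x - y) ⬝ᵥ (T *ᵥ (x - y)))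
      = f xb + (H *ᵥ xb + b) ⬝ᵥ (x - xb) + 1 / 2 * ((x - xb) ⬝ᵥ (T *ᵥ (x - xb)))
        + 1 / 2 * ((D *ᵥ β) ⬝ᵥ (M *ᵥ (D *ᵥ β))) - (x - xb) ⬝ᵥ (M *ᵥ (D *ᵥ β)) := by
  have hHs : H.IsSymm := by
    have h := hH.isHermitian.eq
    rwa [conjTranspose_eq_transpose_of_trivial] at h
  have hMs : M.IsSymm := hM ▸ hT.sub hHs
  have hq : ∀ v, v ⬝ᵥ (T *ᵥ v) = v ⬝ᵥ (H *ᵥ v) + v ⬝ᵥ (M *ᵥ v) := by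
    intro v
    rw [hM, sub_mulVec, dotProduct_sub]
    ring
  have hxy : x - y = (x - xb) - D *ᵥ β := by
    rw [hy]
    abel
  have hexp := quadratic_form_sub hMs (x - xb) (D *ᵥ β)
  rw [← hxy] at hexp
  rw [hf, hf, quadratic_linearization hHs, quadratic_linearization hHs, hq, hq, hexp]
  ring
end

section
/- Let f(x) = ½⟨x, H x⟩ + ⟨b, x⟩ + c be quadratic with H ∈ ℝ^{N×N} symmetric positive definite, b ∈ ℝ^N, c ∈ ℝ, so ∇f(x) = H x + b. Let T ∈ ℝ^{N×N} be symmetric with M := T − H symmetric positive definite, and let D ∈ ℝ^{N×R} have linearly independent columns. Then Dᵀ M D ∈ ℝ^{R×R} is symmetric positive definite, and for every fixed x̄, x ∈ ℝ^N the function β ↦ f(y_β) + ⟨∇f(y_β), x − y_β⟩ + ½‖x − y_β‖_T², where y_β := x̄ + D β, attains its unique minimum over ℝ^R at β* = (Dᵀ M D)⁻¹ Dᵀ M (x − x̄). -/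
/-! With `y` the extrapolated point and `M = T - H`, the exact second order Taylor expansion
`f x = f y + ⟨∇f y, x - y⟩ + ½‖x - y‖_H²` of the quadratic `f` turns the objective into
`f x + ½‖x - y‖_M²` (`epgObj_quadratic`). Minimizing over `y ∈ xb + range D` is therefore a
least squares problem in the norm `‖·‖_M`. Its normal equations are
`(Dᵀ M D) β = Dᵀ M (x - xb)`, and the candidate `β*` solves them because `Dᵀ M D` is positive
definite, hence invertible. The residual at `β*` is `M`-orthogonal to the range of `D`, so by
Pythagoras any other `β` costs the additional amount `½‖D (β - β*)‖_M²`
(`quadForm_lt_of_orthogonal`), which is positive since `D` is injective. -/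

open Matrix

/-- The extrapolated proximal gradient objective
`f(y) + ⟨∇f(y), x − y⟩ + ½‖x − y‖_T²` evaluated at the extrapolated point `y`. -/
noncomputable def epgObj {N : ℕ} (f : (Fin N → ℝ) → ℝ) (f' : (Fin N → ℝ) → Fin N → ℝ)
    (T : Matrix (Fin N) (Fin N) ℝ) (x y : Fin N → ℝ) : ℝ :=
  f y + f' y ⬝ᵥ (x - y) + 1 / 2 * ((x - y) ⬝ᵥ (T *ᵥ (x - y)))

theorem dotProduct_mulVec_swap {N : ℕ} {A : Matrix (Fin N) (Fin N) ℝ} (hA : A.IsSymm)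
    (u v : Fin N → ℝ) : u ⬝ᵥ (A *ᵥ v) = v ⬝ᵥ (A *ᵥ u) := by
  rw [dotProduct_mulVec, ← mulVec_transpose, hA.eq, dotProduct_comm]

/-- For a quadratic `f`, the objective is the constant `f x` plus half the squared
`(T - H)`-distance from `x` to `y`. -/
theorem epgObj_quadratic {N : ℕ} {H : Matrix (Fin N) (Fin N) ℝ} (T : Matrix (Fin N) (Fin N) ℝ)
    (hH : H.IsSymm) (b : Fin N → ℝ) (c : ℝ) {f : (Fin N → ℝ) → ℝ}
    (hf : ∀ z, f z = 1 / 2 * (z ⬝ᵥ (H *ᵥ z)) + b ⬝ᵥ z + c) (x y : Fin N → ℝ) :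
    epgObj f (fun z => H *ᵥ z + b) T x y
      = f x + 1 / 2 * ((x - y) ⬝ᵥ ((T - H) *ᵥ (x - y))) := by
  obtain ⟨d, rfl⟩ : ∃ d, x = y + d := ⟨x - y, by abel⟩
  have h1 := dotProduct_mulVec_swap hH y d
  have h2 := dotProduct_comm (H *ᵥ y) d
  simp only [epgObj, hf, add_sub_cancel_left, add_dotProduct, dotProduct_add, mulVec_add,
    sub_mulVec, dotProduct_sub]
  linarith

/-- Strict Pythagoras inequality: moving away from a vector `r` in a nonzero direction `v` that is
`M`-orthogonal to `r` strictly increases the `M`-norm. -/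
theorem quadForm_lt_of_orthogonal {N : ℕ} {M : Matrix (Fin N) (Fin N) ℝ} (hM : M.PosDef)
    {r v : Fin N → ℝ} (hv : v ≠ 0) (horth : v ⬝ᵥ (M *ᵥ r) = 0) :
    r ⬝ᵥ (M *ᵥ r) < (r - v) ⬝ᵥ (M *ᵥ (r - v)) := by
  have hs : M.IsSymm := by simpa using hM.isHermitian
  have h1 := dotProduct_mulVec_swap hs r v
  have h2 : 0 < v ⬝ᵥ (M *ᵥ v) := by simpa using hM.dotProduct_mulVec_pos hv
  simp only [mulVec_sub, dotProduct_sub, sub_dotProduct]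
  linarith

/-- Theorem 4.3 (optimal extrapolation parameter): for a quadratic
`f x = ½⟨x, H x⟩ + ⟨b, x⟩ + c` with `H` symmetric positive definite, `T` symmetric with
`M := T − H` symmetric positive definite, and `D` with linearly independent columns, the
matrix `Dᵀ M D` is symmetric positive definite and the function
`β ↦ f(y_β) + ⟨∇f(y_β), x − y_β⟩ + ½‖x − y_β‖_T²` with `y_β := x̄ + D β` attains its unique
minimum at `β* = (Dᵀ M D)⁻¹ Dᵀ M (x − x̄)`. -/
theorem optimal_extrapolation_parameter {N R : ℕ}
    (H T M : Matrix (Fin N) (Fin N) ℝ) (hH : H.PosDef) (hT : T.IsSymm)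
    (hM : M = T - H) (hMpd : M.PosDef)
    (b : Fin N → ℝ) (c : ℝ)
    (f : (Fin N → ℝ) → ℝ)
    (hf : ∀ z, f z = 1 / 2 * (z ⬝ᵥ (H *ᵥ z)) + b ⬝ᵥ z + c)
    (D : Matrix (Fin N) (Fin R) ℝ)
    (hD : LinearIndependent ℝ (fun j : Fin R => Dᵀ j))
    (xb x : Fin N → ℝ) :
    (Dᵀ * M * D).PosDef ∧
      ∀ β : Fin R → ℝ,
        β ≠ (Dᵀ * M * D)⁻¹ *ᵥ (Dᵀ *ᵥ (M *ᵥ (x - xb))) →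
          epgObj f (fun z => H *ᵥ z + b) T x
              (xb + D *ᵥ ((Dᵀ * M * D)⁻¹ *ᵥ (Dᵀ *ᵥ (M *ᵥ (x - xb)))))
            < epgObj f (fun z => H *ᵥ z + b) T x (xb + D *ᵥ β) := by
  have hinj : Function.Injective D.mulVec := mulVec_injective_iff.mpr hD
  have hG : (Dᵀ * M * D).PosDef := by
    simpa using hMpd.conjTranspose_mul_mul_same hinj
  refine ⟨hG, fun β hβ => ?_⟩
  have hHs : H.IsSymm := by simpa using hH.isHermitian
  rw [epgObj_quadratic T hHs b c hf, epgObj_quadratic T hHs b c hf, ← hM]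
  set βs := (Dᵀ * M * D)⁻¹ *ᵥ (Dᵀ *ᵥ (M *ᵥ (x - xb))) with hβs
  have hdet : IsUnit (Dᵀ * M * D).det := (isUnit_iff_isUnit_det _).mp hG.isUnit
  have hnormal : Dᵀ *ᵥ (M *ᵥ (D *ᵥ βs)) = Dᵀ *ᵥ (M *ᵥ (x - xb)) := by
    calc Dᵀ *ᵥ (M *ᵥ (D *ᵥ βs)) = (Dᵀ * M * D) *ᵥ βs := by
          simp only [mulVec_mulVec, Matrix.mul_assoc]
      _ = Dᵀ *ᵥ (M *ᵥ (x - xb)) := by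
          rw [hβs, mulVec_mulVec, mul_nonsing_inv _ hdet, one_mulVec]
  have hv : D *ᵥ (β - βs) ≠ 0 := fun h =>
    hβ (sub_eq_zero.mp (hinj (h.trans (mulVec_zero D).symm)))
  have horth : (D *ᵥ (β - βs)) ⬝ᵥ (M *ᵥ (x - (xb + D *ᵥ βs))) = 0 := by
    rw [dotProduct_comm, dotProduct_mulVec, ← mulVec_transpose, ← sub_sub, mulVec_sub,
      mulVec_sub, hnormal, sub_self, zero_dotProduct]
  have key := quadForm_lt_of_orthogonal hMpd hv horth
  have hres : x - (xb + D *ᵥ βs) - D *ᵥ (β - βs) = x - (xb + D *ᵥ β) := by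
    rw [mulVec_sub]; abel
  rw [hres] at key
  linarith
end

section
/- Let H, T ∈ ℝ^{N×N} be symmetric with H positive definite and M := T − H symmetric positive definite, and let D ∈ ℝ^{N×R} have linearly independent columns. Then the matrix Q := T − M D (Dᵀ M D)⁻¹ Dᵀ M is symmetric positive definite. -/
open Matrix

/-!
Write `S := Dᵀ M D`, which is positive definite because `D` has trivial kernel, and let
`P := 1 - D S⁻¹ Dᵀ M` be the `M`-orthogonal projection along the column space of `D`.
Then `M - M D S⁻¹ Dᵀ M = Pᵀ M P` is positive semidefinite. As `T = H + M`, the matrix in question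
is `H + Pᵀ M P`, the sum of a positive definite and a positive semidefinite matrix.
-/

/-- The positive definiteness claim of Theorem 4.3: if `H` is symmetric positive definite,
`T` is symmetric with `M := T − H` symmetric positive definite, and `D` has linearly
independent columns, then `Q := T − M D (Dᵀ M D)⁻¹ Dᵀ M` is symmetric positive definite. -/
theorem quasi_newton_metric_posDef {N R : ℕ}
    (H T M : Matrix (Fin N) (Fin N) ℝ) (hH : H.PosDef) (hT : T.IsSymm)
    (hM : M = T - H) (hMpd : M.PosDef)
    (D : Matrix (Fin N) (Fin R) ℝ)
    (hD : LinearIndependent ℝ (fun j : Fin R => Dᵀ j)) :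
    (T - M * D * (Dᵀ * M * D)⁻¹ * Dᵀ * M).PosDef := by
  have hinj : Function.Injective D.mulVec := Matrix.mulVec_injective_iff.mpr hD
  have hS : (Dᵀ * M * D).PosDef := by
    simpa using hMpd.conjTranspose_mul_mul_same hinj
  have hMt : Mᵀ = M := by simpa using hMpd.isHermitian.eq
  have hSt : (Dᵀ * M * D)ᵀ = Dᵀ * M * D := by simpa using hS.isHermitian.eq
  have hSinv : (Dᵀ * M * D)⁻¹ * (Dᵀ * M * D) = 1 :=
    Matrix.nonsing_inv_mul _ ((Matrix.isUnit_iff_isUnit_det _).mp hS.isUnit)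
  have hP := hMpd.posSemidef.conjTranspose_mul_mul_same (1 - D * (Dᵀ * M * D)⁻¹ * Dᵀ * M)
  have hT' : T = H + M := by rw [hM]; abel
  have hKt : ((Dᵀ * M * D)⁻¹)ᵀ = (Dᵀ * M * D)⁻¹ := by
    rw [Matrix.transpose_nonsing_inv, hSt]
  generalize (Dᵀ * M * D)⁻¹ = K at *
  have key : (1 - D * K * Dᵀ * M)ᴴ * M * (1 - D * K * Dᵀ * M) = M - M * D * K * Dᵀ * M := by
    have h : M * D * K * Dᵀ * M * (D * K * Dᵀ * M) = M * D * K * Dᵀ * M := by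
      calc M * D * K * Dᵀ * M * (D * K * Dᵀ * M)
          = M * D * (K * (Dᵀ * M * D)) * K * Dᵀ * M := by simp only [Matrix.mul_assoc]
        _ = _ := by rw [hSinv, Matrix.mul_one]
    have ht : (1 - D * K * Dᵀ * M)ᴴ * M = M - M * D * K * Dᵀ * M := by
      simp [Matrix.conjTranspose_eq_transpose_of_trivial, Matrix.transpose_mul, hMt, hKt,
        Matrix.sub_mul, Matrix.mul_assoc]
    rw [ht, Matrix.mul_sub, Matrix.mul_one, Matrix.sub_mul, h]
    simp only [Matrix.mul_assoc, sub_self, sub_zero]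
  rw [hT', add_sub_assoc, ← key]
  exact hH.add_posSemidef hP
end

section
/- Let H, T ∈ ℝ^{N×N} be symmetric positive definite with M := T − H symmetric positive definite, let D ∈ ℝ^{N×R} have linearly independent columns, let U := (Dᵀ M D)^{-1/2} Dᵀ M where (Dᵀ M D)^{-1/2} is the inverse of the positive definite square root of Dᵀ M D, and set Q := T − Uᵀ U. Then Q is invertible and Q⁻¹ = T⁻¹ + T⁻¹ Uᵀ (I − U T⁻¹ Uᵀ)⁻¹ U T⁻¹, where I denotes the R×R identity matrix and the matrix I − U T⁻¹ Uᵀ is invertible. -/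
open Matrix

/-!
Write `P = D S⁻¹ U`. Since `S * S = Dᵀ M D`, `P` is the `M`-orthogonal projection onto the column
space of `D`, and `Uᵀ U = M P = Pᵀ M P`. Hence `M - Uᵀ U = (1 - P)ᵀ M (1 - P)` is positive
semidefinite, so `Q = H + (M - Uᵀ U)` is positive definite, in particular invertible.
By the Weinstein–Aronszajn identity `det (1 - U T⁻¹ Uᵀ) = det (1 - T⁻¹ Uᵀ U)`, and
`Q = T (1 - T⁻¹ Uᵀ U)`, so `1 - U T⁻¹ Uᵀ` is invertible too. The formula for `Q⁻¹` is then the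
Woodbury identity.
-/

/-- Removing from `M` its part along the column space of `D` leaves a positive semidefinite
matrix: the difference is the compression of `M` to the `M`-orthogonal complement. -/
theorem posSemidef_sub_transpose_mul {N R : ℕ}
    {M : Matrix (Fin N) (Fin N) ℝ} (hM : M.PosDef) (D : Matrix (Fin N) (Fin R) ℝ)
    {S : Matrix (Fin R) (Fin R) ℝ} (hS : S.PosDef) (hSsq : S * S = Dᵀ * M * D)
    {U : Matrix (Fin R) (Fin N) ℝ} (hU : U = S⁻¹ * (Dᵀ * M)) :
    (M - Uᵀ * U).PosSemidef := by
  have hMt : Mᵀ = M := hM.isHermitian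
  have hSt : Sᵀ = S := hS.isHermitian
  have hSdet : IsUnit S.det := (isUnit_iff_isUnit_det S).1 hS.isUnit
  have hUt : Uᵀ = M * D * S⁻¹ := by
    rw [hU, transpose_mul, transpose_mul, transpose_nonsing_inv, hMt, hSt, transpose_transpose]
  have hUD : U * D = S := by
    rw [hU, Matrix.mul_assoc, ← hSsq, nonsing_inv_mul_cancel_left _ _ hSdet]
  have hMP : M * (D * S⁻¹ * U) = Uᵀ * U := by
    rw [hUt]; simp only [Matrix.mul_assoc]
  have hPM : (D * S⁻¹ * U)ᵀ * M = Uᵀ * U := by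
    have h := congrArg transpose hMP
    rwa [transpose_mul, hMt, transpose_mul Uᵀ U, transpose_transpose] at h
  have hPMP : Uᵀ * U * (D * S⁻¹ * U) = Uᵀ * U := by
    calc Uᵀ * U * (D * S⁻¹ * U) = Uᵀ * ((U * D) * S⁻¹ * U) := by simp only [Matrix.mul_assoc]
      _ = Uᵀ * U := by rw [hUD, mul_nonsing_inv _ hSdet, Matrix.one_mul]
  have key : M - Uᵀ * U = (1 - D * S⁻¹ * U)ᴴ * M * (1 - D * S⁻¹ * U) := by
    rw [conjTranspose_eq_transpose_of_trivial, transpose_sub, transpose_one, Matrix.sub_mul,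
      Matrix.one_mul, hPM, Matrix.mul_sub, Matrix.mul_one, Matrix.sub_mul, hMP, hPMP, sub_self,
      sub_zero]
  rw [key]
  exact hM.posSemidef.conjTranspose_mul_mul_same _

/-- The inverse-metric formula of Theorem 4.3 (rank-R Sherman–Morrison–Woodbury instance):
with `H, T` symmetric positive definite, `M := T − H` symmetric positive definite, `D` with
linearly independent columns, `S` the positive definite square root of `Dᵀ M D` (so
`S * S = Dᵀ M D` and `S⁻¹ = (Dᵀ M D)^{-1/2}`), `U := (Dᵀ M D)^{-1/2} Dᵀ M` and
`Q := T − Uᵀ U`, the matrix `Q` is invertible, `I − U T⁻¹ Uᵀ` is invertible, and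
`Q⁻¹ = T⁻¹ + T⁻¹ Uᵀ (I − U T⁻¹ Uᵀ)⁻¹ U T⁻¹`. -/
theorem quasi_newton_metric_inverse {N R : ℕ}
    (H T M : Matrix (Fin N) (Fin N) ℝ) (hH : H.PosDef) (hT : T.PosDef)
    (hM : M = T - H) (hMpd : M.PosDef)
    (D : Matrix (Fin N) (Fin R) ℝ)
    (hD : LinearIndependent ℝ (fun j : Fin R => Dᵀ j))
    (S : Matrix (Fin R) (Fin R) ℝ) (hS : S.PosDef) (hSsq : S * S = Dᵀ * M * D)
    (U : Matrix (Fin R) (Fin N) ℝ) (hU : U = S⁻¹ * (Dᵀ * M))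
    (Q : Matrix (Fin N) (Fin N) ℝ) (hQ : Q = T - Uᵀ * U) :
    IsUnit Q ∧ IsUnit ((1 : Matrix (Fin R) (Fin R) ℝ) - U * T⁻¹ * Uᵀ) ∧
      Q⁻¹ = T⁻¹ + T⁻¹ * Uᵀ * ((1 : Matrix (Fin R) (Fin R) ℝ) - U * T⁻¹ * Uᵀ)⁻¹ * U * T⁻¹ := by
  have hTu : IsUnit T := hT.isUnit
  have hTdet : IsUnit T.det := (isUnit_iff_isUnit_det T).1 hTu
  have hQu : IsUnit Q := by
    have h : Q = H + (M - Uᵀ * U) := by rw [hQ, hM]; abel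
    rw [h]
    exact (hH.add_posSemidef (posSemidef_sub_transpose_mul hMpd D hS hSsq hU)).isUnit
  have hK : IsUnit ((1 : Matrix (Fin R) (Fin R) ℝ) - U * T⁻¹ * Uᵀ) := by
    have hfac : Q = T * (1 - T⁻¹ * Uᵀ * U) := by
      rw [hQ, Matrix.mul_sub, Matrix.mul_one, Matrix.mul_assoc T⁻¹,
        mul_nonsing_inv_cancel_left _ _ hTdet]
    rw [isUnit_iff_isUnit_det, Matrix.mul_assoc, det_one_sub_mul_comm]
    rw [isUnit_iff_isUnit_det, hfac, det_mul] at hQu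
    exact isUnit_of_mul_isUnit_right hQu
  refine ⟨hQu, hK, ?_⟩
  have hC : (1 : Matrix (Fin R) (Fin R) ℝ)⁻¹ + U * T⁻¹ * (-Uᵀ) = 1 - U * T⁻¹ * Uᵀ := by
    rw [inv_one, Matrix.mul_neg, sub_eq_add_neg]
  have hW := add_mul_mul_inv_eq_sub T (-Uᵀ) 1 U hTu isUnit_one (hC ▸ hK)
  rw [hC, Matrix.mul_one, Matrix.neg_mul, ← sub_eq_add_neg, ← hQ] at hW
  simpa only [Matrix.mul_neg, Matrix.neg_mul, sub_neg_eq_add] using hW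
end

section
/- Let H, T ∈ ℝ^{N×N} be symmetric positive definite with M := T − H symmetric positive definite, let D ∈ ℝ^{N×R} have linearly independent columns, set Y := H D and Q := T − M D (Dᵀ M D)⁻¹ Dᵀ M. Then (D − T⁻¹ Y)ᵀ Y is invertible and Q⁻¹ = T⁻¹ + (D − T⁻¹ Y)[(D − T⁻¹ Y)ᵀ Y]⁻¹ (D − T⁻¹ Y)ᵀ. -/
/-!
Put `U = M D`, `G = Dᵀ M D` and `E = D − T⁻¹ Y`. Since `Y = (T − M) D`, we have `E = T⁻¹ U`, and
`S = Eᵀ Y` equals both `Dᵀ (M T⁻¹ H) D` and `G − Uᵀ T⁻¹ U`. The first expression shows that `S` is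
positive definite: as `T = H + M`, the matrix `M T⁻¹ H` is the parallel sum `(H⁻¹ + M⁻¹)⁻¹`
(`parallel_sum_posDef`), and `D` is injective. The second expression turns the claim into the
Woodbury identity `(T − U G⁻¹ Uᵀ)⁻¹ = T⁻¹ + T⁻¹ U S⁻¹ Uᵀ T⁻¹` (`woodbury_symm`).
-/

open Matrix

theorem parallel_sum_posDef {n : Type*} [Fintype n] [DecidableEq n] {H M : Matrix n n ℝ}
    (hH : H.PosDef) (hM : M.PosDef) : (M * (H + M)⁻¹ * H).PosDef := by
  have h1 : H⁻¹ * H = 1 := nonsing_inv_mul _ ((isUnit_iff_isUnit_det _).1 hH.isUnit)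
  have h2 : M * M⁻¹ = 1 := mul_nonsing_inv _ ((isUnit_iff_isUnit_det _).1 hM.isUnit)
  have key : M * (H + M)⁻¹ * H = (H⁻¹ + M⁻¹)⁻¹ := by
    have e : H⁻¹ + M⁻¹ = H⁻¹ * (H + M) * M⁻¹ := by
      rw [mul_add, add_mul, h1, one_mul, mul_assoc, h2, mul_one, add_comm]
    rw [e, Matrix.mul_inv_rev, Matrix.mul_inv_rev,
      nonsing_inv_nonsing_inv _ ((isUnit_iff_isUnit_det _).1 hH.isUnit),
      nonsing_inv_nonsing_inv _ ((isUnit_iff_isUnit_det _).1 hM.isUnit), mul_assoc]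
  rw [key]
  exact (hH.inv.add hM.inv).inv

theorem woodbury_symm {n m : Type*} [Fintype n] [DecidableEq n] [Fintype m] [DecidableEq m]
    {T : Matrix n n ℝ} {U : Matrix n m ℝ} {G S : Matrix m m ℝ}
    (hT : IsUnit T) (hG : IsUnit G) (hS : IsUnit S) (h : S = G - Uᵀ * T⁻¹ * U) :
    (T - U * G⁻¹ * Uᵀ)⁻¹ = T⁻¹ + T⁻¹ * U * S⁻¹ * (Uᵀ * T⁻¹) := by
  have hT1 : T * T⁻¹ = 1 := mul_nonsing_inv _ ((isUnit_iff_isUnit_det _).1 hT)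
  have hG1 : G⁻¹ * G = 1 := nonsing_inv_mul _ ((isUnit_iff_isUnit_det _).1 hG)
  have hS1 : S * S⁻¹ = 1 := mul_nonsing_inv _ ((isUnit_iff_isUnit_det _).1 hS)
  have hK : Uᵀ * T⁻¹ * U = G - S := by rw [h]; abel
  -- the resolvent identity for `G` and `S`
  have hmid : G⁻¹ * (Uᵀ * T⁻¹ * U) * S⁻¹ = S⁻¹ - G⁻¹ := by
    rw [hK, mul_sub, sub_mul, hG1, Matrix.one_mul, Matrix.mul_assoc, hS1, Matrix.mul_one]
  apply inv_eq_right_inv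
  calc (T - U * G⁻¹ * Uᵀ) * (T⁻¹ + T⁻¹ * U * S⁻¹ * (Uᵀ * T⁻¹))
      = T * T⁻¹ + (T * T⁻¹) * U * S⁻¹ * (Uᵀ * T⁻¹) - U * G⁻¹ * (Uᵀ * T⁻¹)
          - U * (G⁻¹ * (Uᵀ * T⁻¹ * U) * S⁻¹) * (Uᵀ * T⁻¹) := by
        simp only [Matrix.sub_mul, Matrix.mul_add, Matrix.mul_assoc]
        abel
    _ = 1 := by
        rw [hmid, hT1, Matrix.one_mul, Matrix.mul_sub, Matrix.sub_mul]
        abel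

/-- Second formula of Remark 4.5: with `H, T` symmetric positive definite, `M := T − H`
symmetric positive definite, `D` with linearly independent columns, `Y := H D` and
`Q := T − M D (Dᵀ M D)⁻¹ Dᵀ M`, the matrix `(D − T⁻¹ Y)ᵀ Y` is invertible and
`Q⁻¹ = T⁻¹ + (D − T⁻¹ Y)[(D − T⁻¹ Y)ᵀ Y]⁻¹ (D − T⁻¹ Y)ᵀ`. -/
theorem quasi_newton_metric_inverse_via_Y {N R : ℕ}
    (H T M : Matrix (Fin N) (Fin N) ℝ) (hH : H.PosDef) (hT : T.PosDef)
    (hM : M = T - H) (hMpd : M.PosDef)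
    (D : Matrix (Fin N) (Fin R) ℝ)
    (hD : LinearIndependent ℝ (fun j : Fin R => Dᵀ j))
    (Y : Matrix (Fin N) (Fin R) ℝ) (hY : Y = H * D)
    (Q : Matrix (Fin N) (Fin N) ℝ)
    (hQ : Q = T - M * D * (Dᵀ * M * D)⁻¹ * Dᵀ * M) :
    IsUnit ((D - T⁻¹ * Y)ᵀ * Y) ∧
      Q⁻¹ = T⁻¹ + (D - T⁻¹ * Y) * ((D - T⁻¹ * Y)ᵀ * Y)⁻¹ * (D - T⁻¹ * Y)ᵀ := by
  have hHeq : H = T - M := by rw [hM]; abel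
  have hTeq : T = H + M := by rw [hM]; abel
  have hTdet := (isUnit_iff_isUnit_det _).1 hT.isUnit
  have hTs : T⁻¹ᵀ = T⁻¹ := by
    rw [← conjTranspose_eq_transpose_of_trivial]; exact hT.inv.isHermitian
  have hMs : Mᵀ = M := by
    rw [← conjTranspose_eq_transpose_of_trivial]; exact hMpd.isHermitian
  have hinj : Function.Injective D.mulVec := mulVec_injective_iff.2 hD
  have hG : (Dᵀ * M * D).PosDef := by
    simpa [conjTranspose_eq_transpose_of_trivial] using hMpd.conjTranspose_mul_mul_same hinj
  have hE : D - T⁻¹ * Y = T⁻¹ * (M * D) := by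
    rw [hY, hHeq, Matrix.sub_mul, Matrix.mul_sub, nonsing_inv_mul_cancel_left _ _ hTdet]
    abel
  have hEt : (D - T⁻¹ * Y)ᵀ = (M * D)ᵀ * T⁻¹ := by
    rw [hE, transpose_mul, hTs]
  have hS : ((D - T⁻¹ * Y)ᵀ * Y).PosDef := by
    have h := (parallel_sum_posDef hH hMpd).conjTranspose_mul_mul_same hinj
    rw [← hTeq, conjTranspose_eq_transpose_of_trivial] at h
    rw [hEt, hY, transpose_mul, hMs]
    simpa only [Matrix.mul_assoc] using h
  refine ⟨hS.isUnit, ?_⟩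
  have hSG : (D - T⁻¹ * Y)ᵀ * Y = Dᵀ * M * D - (M * D)ᵀ * T⁻¹ * (M * D) := by
    rw [hEt, hY, hHeq, Matrix.sub_mul, Matrix.mul_sub, Matrix.mul_assoc _ T⁻¹ (T * D),
      nonsing_inv_mul_cancel_left _ _ hTdet, transpose_mul, hMs]
  have hQ' : Q = T - (M * D) * (Dᵀ * M * D)⁻¹ * (M * D)ᵀ := by
    rw [hQ, transpose_mul, hMs]
    simp only [Matrix.mul_assoc]
  rw [hQ', woodbury_symm hT.isUnit hG.isUnit hS.isUnit hSG, hEt, hE]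
end

section
/- Let H, T ∈ ℝ^{N×N} be symmetric positive definite with M := T − H symmetric positive definite, let d ∈ ℝ^N, d ≠ 0, and set u := M d / ‖d‖_M and Q := T − u uᵀ. Then uᵀ T⁻¹ u < 1, Q is invertible, and Q⁻¹ = T⁻¹ + (T⁻¹ u)(T⁻¹ u)ᵀ / (1 − uᵀ T⁻¹ u). -/
/-!
Put `w := T⁻¹ u`, `s := uᵀ T⁻¹ u = wᵀ T w` and `e := d / ‖d‖_M`, so that `u = M e` with
`eᵀ M e = 1`. Positivity of `M` at `w - s e` gives (Cauchy–Schwarz) `s² ≤ wᵀ M w`. Since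
`M = T - H`, this reads `s² ≤ s - wᵀ H w`, which forces `s < 1`: either `w = 0` and `s = 0`, or
`wᵀ H w > 0` and `s² < s`. With `1 - s ≠ 0`, the Sherman–Morrison formula is a direct
multiplication.
-/

open Matrix

/-- The quadratic form of a symmetric `M` at `w - s e`, where `s = (M e)ᵀ w` and `eᵀ M e = 1`. -/
lemma quad_sub_smul {N : ℕ} {M : Matrix (Fin N) (Fin N) ℝ} (hM : Mᵀ = M) {e w : Fin N → ℝ}
    {s : ℝ} (he : e ⬝ᵥ (M *ᵥ e) = 1) (hs : (M *ᵥ e) ⬝ᵥ w = s) :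
    (w - s • e) ⬝ᵥ (M *ᵥ (w - s • e)) = w ⬝ᵥ (M *ᵥ w) - s ^ 2 := by
  have h1 : w ⬝ᵥ (M *ᵥ e) = s := by rw [dotProduct_comm, hs]
  have h2 : e ⬝ᵥ (M *ᵥ w) = s := by rw [dotProduct_mulVec, ← mulVec_transpose, hM, hs]
  simp only [mulVec_sub, mulVec_smul, sub_dotProduct, dotProduct_sub, smul_dotProduct,
    dotProduct_smul, smul_eq_mul, h1, h2, he]
  ring

/-- Sherman–Morrison for a symmetric rank-one downdate, as a right inverse. -/
lemma sherman_morrison_mul {N : ℕ} {T : Matrix (Fin N) (Fin N) ℝ} (hT : Tᵀ = T) (hu : IsUnit T)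
    (u : Fin N → ℝ) (hs : u ⬝ᵥ (T⁻¹ *ᵥ u) < 1) :
    (T - vecMulVec u u) *
      (T⁻¹ + (1 - u ⬝ᵥ (T⁻¹ *ᵥ u))⁻¹ • vecMulVec (T⁻¹ *ᵥ u) (T⁻¹ *ᵥ u)) = 1 := by
  have hdet : IsUnit T.det := (isUnit_iff_isUnit_det T).mp hu
  have h1 : T *ᵥ (T⁻¹ *ᵥ u) = u := by
    rw [mulVec_mulVec, mul_nonsing_inv _ hdet, one_mulVec]
  have h2 : u ᵥ* T⁻¹ = T⁻¹ *ᵥ u := by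
    rw [← mulVec_transpose, transpose_nonsing_inv, hT]
  have h3 : 1 - u ⬝ᵥ (T⁻¹ *ᵥ u) ≠ 0 := by linarith
  rw [sub_mul, mul_add, mul_add, mul_nonsing_inv _ hdet, vecMulVec_mul, h2, Matrix.mul_smul, Matrix.mul_smul,
    mul_vecMulVec, h1, vecMulVec_mul_vecMulVec]
  ext i j
  simp only [Matrix.sub_apply, Matrix.add_apply, Matrix.smul_apply, vecMulVec_apply,
    Pi.smul_apply, smul_eq_mul]
  field_simp
  ring

/-- The inverse-metric formula of Corollary 4.6 (Sherman–Morrison instance): with `H, T`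
symmetric positive definite, `M := T − H` symmetric positive definite, `d ≠ 0`,
`u := M d / ‖d‖_M` and `Q := T − u uᵀ`, one has `uᵀ T⁻¹ u < 1`, `Q` is invertible, and
`Q⁻¹ = T⁻¹ + (T⁻¹ u)(T⁻¹ u)ᵀ / (1 − uᵀ T⁻¹ u)`. -/
theorem rank_one_metric_inverse {N : ℕ}
    (H T M : Matrix (Fin N) (Fin N) ℝ) (hH : H.PosDef) (hT : T.PosDef)
    (hM : M = T - H) (hMpd : M.PosDef)
    (d : Fin N → ℝ) (hd : d ≠ 0)
    (u : Fin N → ℝ) (hu : u = (Real.sqrt (d ⬝ᵥ (M *ᵥ d)))⁻¹ • (M *ᵥ d))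
    (Q : Matrix (Fin N) (Fin N) ℝ) (hQ : Q = T - vecMulVec u u) :
    u ⬝ᵥ (T⁻¹ *ᵥ u) < 1 ∧ IsUnit Q ∧
      Q⁻¹ = T⁻¹ + (1 - u ⬝ᵥ (T⁻¹ *ᵥ u))⁻¹ • vecMulVec (T⁻¹ *ᵥ u) (T⁻¹ *ᵥ u) := by
  have hMt : Mᵀ = M := by simpa using hMpd.isHermitian.eq
  have hTt : Tᵀ = T := by simpa using hT.isHermitian.eq
  have hdet : IsUnit T.det := (isUnit_iff_isUnit_det T).mp hT.isUnit
  have hlt : u ⬝ᵥ (T⁻¹ *ᵥ u) < 1 := by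
    have hm : 0 < d ⬝ᵥ (M *ᵥ d) := by simpa using hMpd.dotProduct_mulVec_pos hd
    set c := Real.sqrt (d ⬝ᵥ (M *ᵥ d)) with hc
    have hc0 : 0 < c := Real.sqrt_pos.mpr hm
    have hcc : c * c = d ⬝ᵥ (M *ᵥ d) := Real.mul_self_sqrt hm.le
    have hue : M *ᵥ (c⁻¹ • d) = u := by rw [mulVec_smul, hu]
    have he : (c⁻¹ • d) ⬝ᵥ (M *ᵥ (c⁻¹ • d)) = 1 := by
      rw [mulVec_smul, smul_dotProduct, dotProduct_smul, ← hcc]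
      simp only [smul_eq_mul]
      field_simp
    set w := T⁻¹ *ᵥ u with hw
    have hTw : T *ᵥ w = u := by
      rw [hw, mulVec_mulVec, mul_nonsing_inv _ hdet, one_mulVec]
    have hq := quad_sub_smul hMt he (w := w) (s := u ⬝ᵥ w) (by rw [hue])
    have hnn : 0 ≤ (w - (u ⬝ᵥ w) • (c⁻¹ • d)) ⬝ᵥ (M *ᵥ (w - (u ⬝ᵥ w) • (c⁻¹ • d))) := by
      simpa using hMpd.posSemidef.dotProduct_mulVec_nonneg (w - (u ⬝ᵥ w) • (c⁻¹ • d))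
    have hwM : w ⬝ᵥ (M *ᵥ w) = u ⬝ᵥ w - w ⬝ᵥ (H *ᵥ w) := by
      rw [hM, sub_mulVec, dotProduct_sub, hTw, dotProduct_comm w u]
    rw [hq, hwM] at hnn
    by_cases hw0 : w = 0
    · simp [hw0]
    · have hH0 : 0 < w ⬝ᵥ (H *ᵥ w) := by simpa using hH.dotProduct_mulVec_pos hw0
      nlinarith
  have hmul := sherman_morrison_mul hTt hT.isUnit u hlt
  rw [← hQ] at hmul
  exact ⟨hlt, IsUnit.of_mul_eq_one _ hmul, inv_eq_right_inv hmul⟩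
end

section
/- Let g : ℝ^N → ℝ, let f : ℝ^N → ℝ be differentiable, let a > 0, and let L_k, T_k ∈ ℝ^{N×N} be symmetric such that T_k − L_k − a·I is positive semidefinite. Let x_k, x_{k+1} ∈ ℝ^N, D_k ∈ ℝ^{N×R}, β_k ∈ ℝ^R, and set y := x_k + D_k β_k. Assume the descent condition f(x_{k+1}) ≤ f(y) + ⟨∇f(y), x_{k+1} − y⟩ + ½‖x_{k+1} − y‖_{L_k}², and the inexact extrapolated proximal gradient condition g(x_{k+1}) + f(y) + ⟨∇f(y), x_{k+1} − y⟩ + ½‖x_{k+1} − y‖_{T_k}² ≤ g(x_k) + f(x_k). Then g(x_{k+1}) + f(x_{k+1}) ≤ g(x_k) + f(x_k) − (a/2)‖x_{k+1} − y‖². -/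
open Matrix

/-- The sufficient decrease estimate for one (inexact) step of adaptive FISTA
(key inequality in the proofs of Propositions 4.9 and 4.11): if `T_k − L_k − a·I` is
positive semidefinite, `y = x_k + D_k β_k`, the descent condition
`f(x_{k+1}) ≤ f(y) + ⟨∇f(y), x_{k+1} − y⟩ + ½‖x_{k+1} − y‖_{L_k}²` holds, and the inexact
extrapolated proximal gradient condition
`g(x_{k+1}) + f(y) + ⟨∇f(y), x_{k+1} − y⟩ + ½‖x_{k+1} − y‖_{T_k}² ≤ g(x_k) + f(x_k)` holds,
then `g(x_{k+1}) + f(x_{k+1}) ≤ g(x_k) + f(x_k) − (a/2)‖x_{k+1} − y‖²`. -/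
theorem adaptive_fista_sufficient_decrease {N R : ℕ}
    (g f : (Fin N → ℝ) → ℝ) (f' : (Fin N → ℝ) → Fin N → ℝ)
    (hdiff : Differentiable ℝ f)
    (hgrad : ∀ x v, fderiv ℝ f x v = f' x ⬝ᵥ v)
    (a : ℝ) (ha : 0 < a)
    (Lk Tk : Matrix (Fin N) (Fin N) ℝ) (hLk : Lk.IsSymm) (hTk : Tk.IsSymm)
    (hpsd : (Tk - Lk - a • (1 : Matrix (Fin N) (Fin N) ℝ)).PosSemidef)
    (xk xkp : Fin N → ℝ) (Dk : Matrix (Fin N) (Fin R) ℝ) (βk : Fin R → ℝ)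
    (y : Fin N → ℝ) (hy : y = xk + Dk *ᵥ βk)
    (hdesc : f xkp ≤ f y + f' y ⬝ᵥ (xkp - y)
        + 1 / 2 * ((xkp - y) ⬝ᵥ (Lk *ᵥ (xkp - y))))
    (hinexact : g xkp + f y + f' y ⬝ᵥ (xkp - y)
        + 1 / 2 * ((xkp - y) ⬝ᵥ (Tk *ᵥ (xkp - y))) ≤ g xk + f xk) :
    g xkp + f xkp ≤ g xk + f xk - a / 2 * ((xkp - y) ⬝ᵥ (xkp - y)) := by
  -- Positive semidefiniteness, tested on `xkp - y`, bounds the `Tk`-form below by the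
  -- `Lk`-form plus `a` times the squared Euclidean norm; the claim is then linear.
  have h := hpsd.dotProduct_mulVec_nonneg (xkp - y)
  generalize xkp - y = d at *
  simp only [star_trivial, sub_mulVec, smul_mulVec, one_mulVec, dotProduct_sub,
    dotProduct_smul, smul_eq_mul] at h
  linarith
end

section
/- Let g : ℝ^N → ℝ, let f : ℝ^N → ℝ be differentiable, let a > 0, and let L_k, T_k ∈ ℝ^{N×N} be symmetric such that T_k − L_k − a·I is positive semidefinite. Let D_k ∈ ℝ^{N×R}, and suppose (x_{k+1}, β_k) ∈ ℝ^N × ℝ^R minimizes (x, β) ↦ g(x) + f(y_β) + ⟨∇f(y_β), x − y_β⟩ + ½‖x − y_β‖_{T_k}² over ℝ^N × ℝ^R, where y_β := x_k + D_k β. Assume additionally f(x_{k+1}) ≤ f(y_{β_k}) + ⟨∇f(y_{β_k}), x_{k+1} − y_{β_k}⟩ + ½‖x_{k+1} − y_{β_k}‖_{L_k}². Then for all x ∈ ℝ^N and β ∈ ℝ^R: g(x_{k+1}) + f(x_{k+1}) ≤ g(x) + f(y_β) + ⟨∇f(y_β), x − y_β⟩ + ½‖x − y_β‖_{T_k}²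 − (a/2)‖x_{k+1} − y_{β_k}‖². -/
open Matrix

/-- Inequality (A) in the proof of Proposition 4.9, valid for the exact extrapolated
proximal gradient (EPG) step of Algorithm 4.1: if `T_k − L_k − a·I` is positive
semidefinite, `(x_{k+1}, β_k)` minimizes
`(x, β) ↦ g(x) + f(y_β) + ⟨∇f(y_β), x − y_β⟩ + ½‖x − y_β‖_{T_k}²` with
`y_β := x_k + D_k β`, and the descent condition holds, then for all `x, β`:
`g(x_{k+1}) + f(x_{k+1}) ≤ g(x) + f(y_β) + ⟨∇f(y_β), x − y_β⟩ + ½‖x − y_β‖_{T_k}²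
  − (a/2)‖x_{k+1} − y_{β_k}‖²`. -/
theorem epg_step_decrease_inequality {N R : ℕ}
    (g f : (Fin N → ℝ) → ℝ) (f' : (Fin N → ℝ) → Fin N → ℝ)
    (hdiff : Differentiable ℝ f)
    (hgrad : ∀ x v, fderiv ℝ f x v = f' x ⬝ᵥ v)
    (a : ℝ) (ha : 0 < a)
    (Lk Tk : Matrix (Fin N) (Fin N) ℝ) (hLk : Lk.IsSymm) (hTk : Tk.IsSymm)
    (hpsd : (Tk - Lk - a • (1 : Matrix (Fin N) (Fin N) ℝ)).PosSemidef)
    (xk xkp : Fin N → ℝ) (Dk : Matrix (Fin N) (Fin R) ℝ) (βk : Fin R → ℝ)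
    (hmin : ∀ (x : Fin N → ℝ) (β : Fin R → ℝ),
        g xkp + f (xk + Dk *ᵥ βk) + f' (xk + Dk *ᵥ βk) ⬝ᵥ (xkp - (xk + Dk *ᵥ βk))
            + 1 / 2 * ((xkp - (xk + Dk *ᵥ βk)) ⬝ᵥ (Tk *ᵥ (xkp - (xk + Dk *ᵥ βk))))
          ≤ g x + f (xk + Dk *ᵥ β) + f' (xk + Dk *ᵥ β) ⬝ᵥ (x - (xk + Dk *ᵥ β))
            + 1 / 2 * ((x - (xk + Dk *ᵥ β)) ⬝ᵥ (Tk *ᵥ (x - (xk + Dk *ᵥ β)))))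
    (hdesc : f xkp ≤ f (xk + Dk *ᵥ βk) + f' (xk + Dk *ᵥ βk) ⬝ᵥ (xkp - (xk + Dk *ᵥ βk))
        + 1 / 2 * ((xkp - (xk + Dk *ᵥ βk)) ⬝ᵥ (Lk *ᵥ (xkp - (xk + Dk *ᵥ βk))))) :
    ∀ (x : Fin N → ℝ) (β : Fin R → ℝ),
      g xkp + f xkp
        ≤ g x + f (xk + Dk *ᵥ β) + f' (xk + Dk *ᵥ β) ⬝ᵥ (x - (xk + Dk *ᵥ β))
          + 1 / 2 * ((x - (xk + Dk *ᵥ β)) ⬝ᵥ (Tk *ᵥ (x - (xk + Dk *ᵥ β))))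
          - a / 2 * ((xkp - (xk + Dk *ᵥ βk)) ⬝ᵥ (xkp - (xk + Dk *ᵥ βk))) := by
  intro x β
  have hm := hmin x β
  -- Positive semidefiniteness, tested on the residual of the step, bounds the gap between
  -- the `Tk`- and `Lk`-quadratic terms from below by `a ‖·‖²`.
  have hp := hpsd.dotProduct_mulVec_nonneg (xkp - (xk + Dk *ᵥ βk))
  simp only [star_trivial, sub_mulVec, smul_mulVec, one_mulVec, dotProduct_sub,
    dotProduct_smul, smul_eq_mul] at hp hm hdesc ⊢
  linarith
end

section
/- Let g : ℝ^N → ℝ, let f : ℝ^N → ℝ be differentiable with g + f bounded from below, let a > 0. For each k ∈ ℕ let L_k, T_k ∈ ℝ^{N×N} be symmetric with T_k − L_k − a·I positive semidefinite, let D_k ∈ ℝ^{N×R}, β_k ∈ ℝ^R, and let x_k ∈ ℝ^N satisfy, with y_k := x_k + D_k β_k, both the descent condition f(x_{k+1}) ≤ f(y_k) + ⟨∇f(y_k), x_{k+1} − y_k⟩ + ½‖x_{k+1} − y_k‖_{L_k}² and the inexact condition g(x_{k+1}) + f(y_k) + ⟨∇f(y_k), x_{k+1} − y_k⟩ + ½‖x_{k+1}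 − y_k‖_{T_k}² ≤ g(x_k) + f(x_k). Then the sequence (g(x_k) + f(x_k))_{k∈ℕ} is non-increasing and converges, and ‖x_{k+1} − y_k‖ → 0 as k → ∞. -/
/-!
Subtracting the descent condition from the inexact condition cancels the linear model of `f` at
`y k` and leaves `½‖x (k + 1) - y k‖²` in the metric `T k - L k`, which dominates `a • 1`
(`smul_dotProduct_self_le`). Hence each step lowers the objective by at least
`a / 2 * ‖x (k + 1) - y k‖²`. The objective values are thus antitone, and being bounded below they
converge, so consecutive differences, and with them the residuals, tend to zero.
-/

open Matrix Filter Topology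

/-- If `T - L ⪰ a • 1`, the quadratic forms of `T` and `L` differ by at least `a‖v‖²`. -/
lemma smul_dotProduct_self_le {N : ℕ} {a : ℝ} {L T : Matrix (Fin N) (Fin N) ℝ}
    (h : (T - L - a • (1 : Matrix (Fin N) (Fin N) ℝ)).PosSemidef) (v : Fin N → ℝ) :
    a * (v ⬝ᵥ v) + v ⬝ᵥ (L *ᵥ v) ≤ v ⬝ᵥ (T *ᵥ v) := by
  have := h.dotProduct_mulVec_nonneg v
  simp only [sub_mulVec, smul_mulVec, one_mulVec, dotProduct_sub, dotProduct_smul,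
    star_trivial, smul_eq_mul] at this
  linarith

/-- The objective-value and residual part of Propositions 4.9 and 4.11 (convergence of
adaptive FISTA): under the per-iteration descent and inexact EPG conditions with
`T_k − L_k − a·I` positive semidefinite and `g + f` bounded from below, the sequence of
objective values `(g(x_k) + f(x_k))` is non-increasing and converges, and
`‖x_{k+1} − y_k‖ → 0`, where `y_k := x_k + D_k β_k`. -/
theorem adaptive_fista_convergence {N R : ℕ}
    (g f : (Fin N → ℝ) → ℝ) (f' : (Fin N → ℝ) → Fin N → ℝ)
    (hdiff : Differentiable ℝ f)
    (hgrad : ∀ x v, fderiv ℝ f x v = f' x ⬝ᵥ v)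
    (hbdd : BddBelow (Set.range fun x => g x + f x))
    (a : ℝ) (ha : 0 < a)
    (L T : ℕ → Matrix (Fin N) (Fin N) ℝ)
    (hL : ∀ k, (L k).IsSymm) (hT : ∀ k, (T k).IsSymm)
    (hpsd : ∀ k, (T k - L k - a • (1 : Matrix (Fin N) (Fin N) ℝ)).PosSemidef)
    (D : ℕ → Matrix (Fin N) (Fin R) ℝ) (β : ℕ → Fin R → ℝ)
    (x : ℕ → Fin N → ℝ)
    (y : ℕ → Fin N → ℝ) (hy : ∀ k, y k = x k + D k *ᵥ β k)
    (hdesc : ∀ k, f (x (k + 1)) ≤ f (y k) + f' (y k) ⬝ᵥ (x (k + 1) - y k)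
        + 1 / 2 * ((x (k + 1) - y k) ⬝ᵥ (L k *ᵥ (x (k + 1) - y k))))
    (hinexact : ∀ k, g (x (k + 1)) + f (y k) + f' (y k) ⬝ᵥ (x (k + 1) - y k)
        + 1 / 2 * ((x (k + 1) - y k) ⬝ᵥ (T k *ᵥ (x (k + 1) - y k)))
        ≤ g (x k) + f (x k)) :
    Antitone (fun k => g (x k) + f (x k)) ∧
      (∃ l : ℝ, Tendsto (fun k => g (x k) + f (x k)) atTop (nhds l)) ∧
      Tendsto (fun k => Real.sqrt ((x (k + 1) - y k) ⬝ᵥ (x (k + 1) - y k)))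
        atTop (nhds 0) := by
  have hdec : ∀ k, g (x (k + 1)) + f (x (k + 1))
      + a / 2 * ((x (k + 1) - y k) ⬝ᵥ (x (k + 1) - y k)) ≤ g (x k) + f (x k) := fun k => by
    have := smul_dotProduct_self_le (hpsd k) (x (k + 1) - y k)
    linarith [hdesc k, hinexact k]
  have hres : ∀ k, 0 ≤ (x (k + 1) - y k) ⬝ᵥ (x (k + 1) - y k) := fun k =>
    Finset.sum_nonneg fun i _ => mul_self_nonneg _
  have hanti : Antitone (fun k => g (x k) + f (x k)) := antitone_nat_of_succ_le fun k => by
    have := mul_nonneg (half_pos ha).le (hres k)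
    linarith [hdec k]
  have hlim := tendsto_atTop_ciInf hanti
    (hbdd.mono (Set.range_comp_subset_range x fun z => g z + f z))
  refine ⟨hanti, ⟨_, hlim⟩, ?_⟩
  have hdiff0 := (hlim.sub (hlim.comp (tendsto_add_atTop_nat 1))).const_mul (2 / a)
  rw [sub_self, mul_zero] at hdiff0
  -- The squared residual is at most `2 / a` times the drop of the objective.
  have hsq : Tendsto (fun k => (x (k + 1) - y k) ⬝ᵥ (x (k + 1) - y k)) atTop (nhds 0) := by
    refine squeeze_zero hres (fun k => ?_) hdiff0
    have h := hdec k
    simp only [Function.comp_apply]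
    rw [div_mul_eq_mul_div, le_div_iff₀ ha]
    linarith
  simpa using hsq.sqrt
end
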